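/- There exists a constant C > 0 such that for every Schwartz function a on ℝ^{2d} there exists a nonnegative function F ∈ L¹(ℝ^d) with ‖F‖_{L¹} ≤ C · ‖a‖_{M^{2,1}} and such that the integral kernel K(x,y) = ∫_{ℝ^d} a(x,ω) e^{2πi(x−y)·ω} dω of the operator a(x,D) satisfies |K(x,y)| ≤ F(x−y) for all x, y ∈ ℝ^d. -/

import Mathlib

open MeasureTheory SchwartzMap Complex ENNReal NNReal

noncomputable section

/-- Mixed `L^p`-type norm of an `ℝ≥0∞`-valued function, with the usual
`essSup` modification when `p = ∞`. -/
def lqNorm {α : Type*} [MeasurableSpace α] (μ : Measure α) (p : ℝ≥0∞)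
    (f : α → ℝ≥0∞) : ℝ≥0∞ :=
  if p = ∞ then essSup f μ else (∫⁻ a, f a ^ p.toReal ∂μ) ^ (1 / p.toReal)

/-- Conjugate exponent in `ℝ≥0∞` : `1/p + 1/p' = 1`, with `1' = ∞`, `∞' = 1`. -/
def dualExp (p : ℝ≥0∞) : ℝ≥0∞ :=
  if p = 1 then ∞ else if p = ∞ then 1 else ENNReal.ofReal (p.toReal / (p.toReal - 1))

/-- `1/p` as a real number, with the convention `1/∞ = 0`. -/
def invR (p : ℝ≥0∞) : ℝ := (p⁻¹).toReal

/-- The Gaussian window `G(t) = exp(-π |t|²)` (as a complex-valued function). -/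
def gaussWin {ι : Type*} [Fintype ι] (t : EuclideanSpace ℝ ι) : ℂ :=
  Complex.exp (-(Real.pi * ‖t‖ ^ 2))

/-- Short-time Fourier transform with Gaussian window:
`V_G F (x, ω) = ∫ F t * conj (G (t - x)) * exp (-2πi ω⬝t) dt`. -/
def STFT {ι : Type*} [Fintype ι] (F : EuclideanSpace ℝ ι → ℂ)
    (x ω : EuclideanSpace ℝ ι) : ℂ :=
  ∫ t, F t * (starRingEnd ℂ) (gaussWin (t - x)) *
    Complex.exp (Complex.I * (-(2 * Real.pi * (inner ℝ ω t : ℝ))))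

/-- Modulation space norm `M^{p,q}`. -/
def modNorm {ι : Type*} [Fintype ι] (p q : ℝ≥0∞)
    (F : EuclideanSpace ℝ ι → ℂ) : ℝ≥0∞ :=
  lqNorm volume q fun ω => lqNorm volume p fun x => (‖STFT F x ω‖₊ : ℝ≥0∞)

/-- Wiener amalgam norm `W(𝓕 L^p, L^q)` (local component Fourier–Lebesgue). -/
def wFLNorm {ι : Type*} [Fintype ι] (p q : ℝ≥0∞)
    (F : EuclideanSpace ℝ ι → ℂ) : ℝ≥0∞ :=
  lqNorm volume q fun x => lqNorm volume p fun ω => (‖STFT F x ω‖₊ : ℝ≥0∞)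

/-- The unit cube `[0,1)^d`. -/
def unitCube (d : ℕ) : Set (EuclideanSpace ℝ (Fin d)) :=
  {x | ∀ i, x i ∈ Set.Ico (0 : ℝ) 1}

/-- Wiener amalgam norm
`‖f‖_{W(L^r,L^s)} = ( Σ_{n ∈ ℤ^d} ( ∫_{[0,1)^d} |f(x+n)|^r dx )^{s/r} )^{1/s}`. -/
def wNorm (d : ℕ) (r s : ℝ≥0∞) (f : EuclideanSpace ℝ (Fin d) → ℂ) : ℝ≥0∞ :=
  lqNorm (Measure.count : Measure (Fin d → ℤ)) s fun n =>
    lqNorm (volume.restrict (unitCube d)) r fun x =>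
      (‖f (x + show EuclideanSpace ℝ (Fin d) from WithLp.toLp 2 fun i => (n i : ℝ))‖₊ : ℝ≥0∞)

/-- Pairing `(x, ω) ∈ ℝ^d × ℝ^d ↦ ℝ^{2d}`. -/
def pairE {d : ℕ} (x ω : EuclideanSpace ℝ (Fin d)) :
    EuclideanSpace ℝ (Fin d ⊕ Fin d) :=
  WithLp.toLp 2 fun i => Sum.elim (fun j => x j) (fun j => ω j) i

/-- First (space) component of a point of `ℝ^{2d}`. -/
def xpart {d : ℕ} (z : EuclideanSpace ℝ (Fin d ⊕ Fin d)) :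
    EuclideanSpace ℝ (Fin d) := WithLp.toLp 2 fun i => z (Sum.inl i)

/-- Second (frequency) component of a point of `ℝ^{2d}`. -/
def wpart {d : ℕ} (z : EuclideanSpace ℝ (Fin d ⊕ Fin d)) :
    EuclideanSpace ℝ (Fin d) := WithLp.toLp 2 fun i => z (Sum.inr i)

/-- Fourier transform `f̂(ω) = ∫ f t e^{-2πi t⬝ω} dt`. -/
def fTrans {ι : Type*} [Fintype ι] (f : EuclideanSpace ℝ ι → ℂ)
    (ω : EuclideanSpace ℝ ι) : ℂ :=
  ∫ t, f t * Complex.exp (Complex.I * (-(2 * Real.pi * (inner ℝ t ω : ℝ))))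

/-- Kohn–Nirenberg operator `a(x,D) f (x) = ∫ a(x,ω) f̂(ω) e^{2πi x⬝ω} dω`. -/
def KNop {d : ℕ} (a : EuclideanSpace ℝ (Fin d ⊕ Fin d) → ℂ)
    (f : EuclideanSpace ℝ (Fin d) → ℂ) (x : EuclideanSpace ℝ (Fin d)) : ℂ :=
  ∫ ω, a (pairE x ω) * fTrans f ω *
    Complex.exp (Complex.I * (2 * Real.pi * (inner ℝ x ω : ℝ)))

/-- Weyl operator `L_σ f (x) = ∫∫ e^{2πi (x-y)⬝ω} σ((x+y)/2, ω) f(y) dy dω`. -/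
def weylOp {d : ℕ} (σ : EuclideanSpace ℝ (Fin d ⊕ Fin d) → ℂ)
    (f : EuclideanSpace ℝ (Fin d) → ℂ) (x : EuclideanSpace ℝ (Fin d)) : ℂ :=
  ∫ y, ∫ ω, Complex.exp (Complex.I * (2 * Real.pi * (inner ℝ (x - y) ω : ℝ))) *
    σ (pairE ((2 : ℝ)⁻¹ • (x + y)) ω) * f y

/-- Cross-Wigner distribution
`W(g,f)(x,ω) = ∫ g(x+t/2) conj(f(x−t/2)) e^{−2πi ω⬝t} dt`. -/
def wigner {d : ℕ} (g f : EuclideanSpace ℝ (Fin d) → ℂ)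
    (z : EuclideanSpace ℝ (Fin d ⊕ Fin d)) : ℂ :=
  ∫ t, g (xpart z + (2 : ℝ)⁻¹ • t) * (starRingEnd ℂ) (f (xpart z - (2 : ℝ)⁻¹ • t)) *
    Complex.exp (Complex.I * (-(2 * Real.pi * (inner ℝ (wpart z) t : ℝ))))

end
open FourierTransform

section KN
variable {ι : Type*} [Fintype ι]

lemma kn_gauss_temperate (ω : EuclideanSpace ℝ ι) :
    Function.HasTemperateGrowth (fun η : EuclideanSpace ℝ ι => gaussWin (η - ω)) := by
  have hf : Function.HasTemperateGrowth
      (fun η : EuclideanSpace ℝ ι => -(Real.pi * ‖η - ω‖ ^ 2)) := by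
    have h2 : Function.HasTemperateGrowth (fun η : EuclideanSpace ℝ ι => ‖η - ω‖ ^ 2) :=
      Function.HasTemperateGrowth.comp
        (Function.hasTemperateGrowth_norm_sq (EuclideanSpace ℝ ι))
        (Function.HasTemperateGrowth.id.sub (Function.HasTemperateGrowth.const ω))
    exact ((Function.HasTemperateGrowth.const Real.pi).mul h2).neg
  have he : Function.HasTemperateGrowth
      (Real.exp ∘ (fun η : EuclideanSpace ℝ ι => -(Real.pi * ‖η - ω‖ ^ 2))) := by
    have hu : UniqueDiffOn ℝ (Set.Iic (0:ℝ)) := uniqueDiffOn_Iic 0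
    apply hf.comp' (t := Set.Iic (0:ℝ)) _ hu Real.contDiff_exp.contDiffOn
    · intro N
      refine ⟨0, 1, zero_le_one, fun n _ x hx => ?_⟩
      rw [norm_iteratedFDerivWithin_eq_norm_iteratedDerivWithin,
        iteratedDerivWithin_eq_iteratedDeriv hu
          (Real.contDiff_exp.contDiffAt) hx, iteratedDeriv_eq_iterate, Real.iter_deriv_exp]
      simpa using hx
    · rintro _ ⟨η, rfl⟩
      simp only [Set.mem_Iic]
      have := Real.pi_pos
      have : 0 ≤ Real.pi * ‖η - ω‖ ^ 2 := by positivity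
      linarith
  have := Function.HasTemperateGrowth.comp Function.Complex.hasTemperateGrowth_ofReal he
  have e : (fun η : EuclideanSpace ℝ ι => gaussWin (η - ω)) =
      Complex.ofReal ∘ Real.exp ∘ (fun η : EuclideanSpace ℝ ι => -(Real.pi * ‖η - ω‖ ^ 2)) := by
    funext η
    simp [gaussWin]
  rw [e]
  exact this

/-- the Schwartz function `G(η-ω) â(η)`. -/
noncomputable def knH (a : SchwartzMap (EuclideanSpace ℝ ι) ℂ) (ω : EuclideanSpace ℝ ι) :
    SchwartzMap (EuclideanSpace ℝ ι) ℂ :=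
  SchwartzMap.smulLeftCLM ℂ (fun η : EuclideanSpace ℝ ι => gaussWin (η - ω)) (𝓕 a)

lemma knH_apply (a : SchwartzMap (EuclideanSpace ℝ ι) ℂ) (ω η : EuclideanSpace ℝ ι) :
    knH a ω η = gaussWin (η - ω) * (𝓕 a) η := by
  rw [knH, SchwartzMap.smulLeftCLM_apply_apply (kn_gauss_temperate ω), smul_eq_mul]

lemma kn_stft (a : SchwartzMap (EuclideanSpace ℝ ι) ℂ) (x ω : EuclideanSpace ℝ ι) :
    ‖STFT a x ω‖ = ‖(𝓕⁻ (knH a ω)) x‖ := by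
  let g0 : EuclideanSpace ℝ ι → ℂ :=
    fun v ↦ cexp (-(Real.pi : ℂ) * ‖v‖ ^ 2 + 2 * Real.pi * Complex.I * (inner ℝ x v : ℝ))
  have hpi : 0 < (Real.pi : ℂ).re := by simpa using Real.pi_pos
  have J0 : Integrable g0 :=
    GaussianFourier.integrable_cexp_neg_mul_sq_norm_add hpi _ _
  have J : Integrable (fun v => g0 (v + -ω)) := J0.comp_add_right (-ω)
  have hF : ∀ t, 𝓕 (fun v => g0 (v + -ω)) t
      = cexp (Complex.I * (-(2 * Real.pi * (inner ℝ ω t : ℝ)))) * gaussWin (t - x) := by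
    intro t
    have h1 := congrFun (VectorFourier.fourierIntegral_comp_add_right (e := Real.fourierChar)
      (μ := volume) (L := innerₗ (EuclideanSpace ℝ ι)) g0 (-ω)) t
    have h2 : 𝓕 g0 t = gaussWin (t - x) := by
      have := fourier_gaussian_innerProductSpace' hpi x t
      rw [this, div_self (by exact_mod_cast Real.pi_ne_zero), Complex.one_cpow, one_mul, gaussWin,
        norm_sub_rev]
      congr 1
      have : (Real.pi : ℂ) ≠ 0 := by exact_mod_cast Real.pi_ne_zero
      field_simp
    rw [← h2]
    refine h1.trans ?_
    rw [Circle.smul_def, Real.fourierChar_apply, smul_eq_mul]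
    congr 1
    congr 1
    simp
    ring
  have key := VectorFourier.integral_fourierIntegral_smul_eq_flip (L := innerₗ (EuclideanSpace ℝ ι))
      Real.continuous_fourierChar continuous_inner a.integrable J (μ := volume) (ν := volume)
  have key2 : ∫ η, (𝓕 a) η * g0 (η + -ω) = STFT a x ω := by
    rw [SchwartzMap.fourier_coe]
    refine key.trans ?_
    rw [STFT]
    congr 1
    ext t
    rw [flip_innerₗ]
    have := hF t
    change _ • 𝓕 (fun v => g0 (v + -ω)) t = _
    rw [this, smul_eq_mul]
    have hc : (starRingEnd ℂ) (gaussWin (t - x)) = gaussWin (t - x) := by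
      rw [gaussWin, ← Complex.exp_conj]
      simp
    rw [hc]; ring
  have key3 : (𝓕⁻ (knH a ω)) x
      = cexp (2 * Real.pi * Complex.I * (inner ℝ x ω : ℝ)) * ∫ η, (𝓕 a) η * g0 (η + -ω) := by
    rw [SchwartzMap.fourierInv_coe, Real.fourierInv_eq', ← integral_const_mul]
    congr 1
    ext η
    rw [knH_apply, smul_eq_mul]
    simp only [g0, gaussWin, ← sub_eq_add_neg]
    rw [Complex.exp_add, inner_sub_right, real_inner_comm]
    push_cast
    have : cexp (2 * Real.pi * (inner ℝ x η : ℝ) * Complex.I) =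
      cexp (2 * Real.pi * Complex.I * (inner ℝ x ω : ℝ)) *
      cexp (2 * Real.pi * Complex.I * ((inner ℝ x η : ℝ) - (inner ℝ x ω : ℝ))) := by
      rw [← Complex.exp_add]; congr 1; ring
    rw [this, neg_mul]
    ring
  rw [key3, key2, norm_mul]
  have : ‖cexp (2 * Real.pi * Complex.I * (inner ℝ x ω : ℝ))‖ = 1 := by
    rw [Complex.norm_exp]; simp
  rw [this, one_mul]

lemma kn_lint_sq (f : SchwartzMap (EuclideanSpace ℝ ι) ℂ) :
    ∫⁻ x, (‖f x‖₊ : ℝ≥0∞) ^ (2:ℝ) = ENNReal.ofReal (∫ x, ‖f x‖ ^ 2) := by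
  rw [ofReal_integral_eq_lintegral_ofReal]
  · congr 1
    ext x
    rw [ENNReal.ofReal_pow (norm_nonneg _), ofReal_norm]
    simp [enorm]
  · have := (f.memLp 2 volume).integrable_norm_pow (by norm_num)
    simpa using this
  · exact Filter.Eventually.of_forall fun x => by positivity

lemma kn_planch (a : SchwartzMap (EuclideanSpace ℝ ι) ℂ) (ω : EuclideanSpace ℝ ι) :
    ∫⁻ x, (‖STFT a x ω‖₊ : ℝ≥0∞) ^ (2:ℝ) = ∫⁻ η, (‖knH a ω η‖₊ : ℝ≥0∞) ^ (2:ℝ) := by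
  have h1 : ∀ x, ‖STFT a x ω‖₊ = ‖(𝓕⁻ (knH a ω)) x‖₊ := fun x => NNReal.eq (kn_stft a x ω)
  simp_rw [h1]
  rw [kn_lint_sq, kn_lint_sq, ← SchwartzMap.integral_norm_sq_fourier (𝓕⁻ (knH a ω)),
    FourierTransform.fourier_fourierInv_eq]

/-- `∫ G²`. -/
noncomputable def knc (ι : Type*) [Fintype ι] : ℝ≥0∞ := ∫⁻ t : EuclideanSpace ℝ ι, (‖gaussWin t‖₊ : ℝ≥0∞) ^ (2:ℝ)

lemma kn_gauss_cont : Continuous (fun t : EuclideanSpace ℝ ι => gaussWin t) := by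
  unfold gaussWin; fun_prop

lemma knc_ne_zero : knc ι ≠ 0 := by
  unfold knc
  rw [Ne, lintegral_eq_zero_iff (by have := kn_gauss_cont (ι := ι); fun_prop)]
  intro h
  have : (volume : Measure (EuclideanSpace ℝ ι)) Set.univ = 0 := by
    rw [Filter.EventuallyEq, ae_iff] at h
    convert h using 2
    ext t
    simp [gaussWin]
  exact (isOpen_univ.measure_pos volume Set.univ_nonempty).ne' this

lemma knc_ne_top : knc ι ≠ ∞ := by
  have h : Integrable (fun t : EuclideanSpace ℝ ι => cexp (-(2 * Real.pi : ℂ) * ‖t‖ ^ 2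
      + 0 * (inner ℝ (0 : EuclideanSpace ℝ ι) t : ℝ))) :=
    GaussianFourier.integrable_cexp_neg_mul_sq_norm_add (by simp [Real.pi_pos]) _ _
  have h2 := h.2
  rw [HasFiniteIntegral] at h2
  convert h2.ne using 2
  unfold knc
  congr 1
  ext t
  rw [show ∀ y : ℂ, (‖y‖₊ : ℝ≥0∞) = ‖y‖ₑ from fun _ => rfl, ENNReal.rpow_two, ← enorm_pow]
  congr 1
  rw [gaussWin, ← Complex.exp_nat_mul]
  congr 1
  push_cast
  ring

lemma kn_cs (a : SchwartzMap (EuclideanSpace ℝ ι) ℂ) (ω : EuclideanSpace ℝ ι) :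
    ∫⁻ η, (‖(𝓕 a) η‖₊ : ℝ≥0∞) * (‖gaussWin (η - ω)‖₊ : ℝ≥0∞) ^ (2:ℝ) ≤
      (∫⁻ x, (‖STFT a x ω‖₊ : ℝ≥0∞) ^ (2:ℝ)) ^ (1 / (2:ℝ)) * knc ι ^ (1 / (2:ℝ)) := by
  rw [kn_planch]
  have hc : knc ι = ∫⁻ η : EuclideanSpace ℝ ι, (‖gaussWin (η - ω)‖₊ : ℝ≥0∞) ^ (2:ℝ) :=
    (lintegral_sub_right_eq_self (fun t => (‖gaussWin t‖₊ : ℝ≥0∞) ^ (2:ℝ)) ω).symm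
  rw [hc]
  have hg := kn_gauss_cont (ι := ι)
  have hgs : Continuous (fun η : EuclideanSpace ℝ ι => gaussWin (η - ω)) :=
    hg.comp (continuous_sub_right ω)
  have hk := (knH a ω).continuous
  refine le_trans (le_of_eq ?_) (ENNReal.lintegral_mul_le_Lp_mul_Lq volume
    Real.HolderConjugate.two_two (by fun_prop) (by fun_prop))
  congr 1
  ext η
  rw [Pi.mul_apply, knH_apply, nnnorm_mul, ENNReal.coe_mul, ENNReal.rpow_two]
  ring

lemma kn_l1 (a : SchwartzMap (EuclideanSpace ℝ ι) ℂ) :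
    ∫⁻ η, (‖(𝓕 a) η‖₊ : ℝ≥0∞) * knc ι ≤ modNorm 2 1 a * knc ι ^ (1 / (2:ℝ)) := by
  have hg := kn_gauss_cont (ι := ι)
  have hk := (𝓕 a).continuous
  have e : modNorm 2 1 a = ∫⁻ ω, (∫⁻ x, (‖STFT a x ω‖₊ : ℝ≥0∞) ^ (2:ℝ)) ^ (1 / (2:ℝ)) := by
    simp [modNorm, lqNorm]
  rw [e, ← lintegral_mul_const' _ _ (ENNReal.rpow_ne_top_of_nonneg (by norm_num) knc_ne_top)]
  refine le_trans (le_of_eq ?_) (lintegral_mono (kn_cs a))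
  have hc : ∀ η, knc ι = ∫⁻ ω : EuclideanSpace ℝ ι, (‖gaussWin (η - ω)‖₊ : ℝ≥0∞) ^ (2:ℝ) := fun η =>
    (lintegral_sub_left_eq_self (fun t => (‖gaussWin t‖₊ : ℝ≥0∞) ^ (2:ℝ)) η).symm
  rw [lintegral_lintegral_swap]
  · congr 1
    ext η
    rw [lintegral_const_mul' _ _ (by simp), ← hc η]
  · have : Continuous (fun p : EuclideanSpace ℝ ι × EuclideanSpace ℝ ι => gaussWin (p.2 - p.1)) :=
      hg.comp (by fun_prop)
    unfold Function.uncurry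
    fun_prop

end KN
section KN2
variable {d : ℕ}

lemma kn_pair_mp : MeasurePreserving
    (fun p : EuclideanSpace ℝ (Fin d) × EuclideanSpace ℝ (Fin d) => pairE p.1 p.2)
    (volume.prod volume) volume := by
  have h1 := (PiLp.volume_preserving_ofLp (Fin d)).prod (PiLp.volume_preserving_ofLp (Fin d))
  have h2 := volume_measurePreserving_sumPiEquivProdPi_symm (fun _ : Fin d ⊕ Fin d => ℝ)
  have h3 := PiLp.volume_preserving_toLp (Fin d ⊕ Fin d)
  have h := h3.comp (h2.comp h1)
  have e : (fun p : EuclideanSpace ℝ (Fin d) × EuclideanSpace ℝ (Fin d) => pairE p.1 p.2) =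
      WithLp.toLp 2 ∘ (MeasurableEquiv.sumPiEquivProdPi (fun _ : Fin d ⊕ Fin d => ℝ)).symm ∘
        Prod.map WithLp.ofLp WithLp.ofLp := by
    funext p
    ext i
    rcases i with i | i <;> rfl
  rw [e]
  exact h

lemma kn_pair_cont : Continuous
    (fun p : EuclideanSpace ℝ (Fin d) × EuclideanSpace ℝ (Fin d) => pairE p.1 p.2) := by
  unfold pairE
  refine (PiLp.continuous_toLp 2 _).comp (continuous_pi fun i => ?_)
  rcases i with i | i <;> simp <;> fun_prop

lemma kn_pair_normsq (x w : EuclideanSpace ℝ (Fin d)) :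
    ‖pairE x w‖ ^ 2 = ‖x‖ ^ 2 + ‖w‖ ^ 2 := by
  simp [EuclideanSpace.norm_sq_eq, pairE]

lemma kn_pair_inner (x w x' w' : EuclideanSpace ℝ (Fin d)) :
    (inner ℝ (pairE x w) (pairE x' w') : ℝ) = inner ℝ x x' + inner ℝ w w' := by
  simp [PiLp.inner_apply, pairE]

lemma kn_pair_emb : MeasurableEmbedding
    (fun p : EuclideanSpace ℝ (Fin d) × EuclideanSpace ℝ (Fin d) => pairE p.1 p.2) := by
  refine kn_pair_cont.measurableEmbedding fun p q h => ?_
  have h' : ∀ i, pairE p.1 p.2 i = pairE q.1 q.2 i := fun i => congrArg (fun z => z i) h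
  ext i
  · exact h' (Sum.inl i)
  · exact h' (Sum.inr i)

lemma kn_decay (f : SchwartzMap (EuclideanSpace ℝ (Fin d ⊕ Fin d)) ℂ) :
    ∃ Φ : EuclideanSpace ℝ (Fin d) → ℝ, Integrable Φ ∧
      (∀ x w, ‖f (pairE x w)‖ ≤ Φ w) ∧ (∀ x w, ‖f (pairE x w)‖ ≤ Φ x) := by
  let C : ℝ := 2 ^ (d+1) * (Finset.Iic ((d+1, 0) : ℕ × ℕ)).sup
    (fun m => SchwartzMap.seminorm ℝ m.1 m.2) f
  have hC : ∀ z, (1 + ‖z‖) ^ (d+1) * ‖f z‖ ≤ C := by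
    intro z
    simpa using SchwartzMap.one_add_le_sup_seminorm_apply (𝕜 := ℝ) (m := (d+1, 0)) (k := d+1)
      (n := 0) le_rfl le_rfl f z
  have hI : Integrable (fun x : EuclideanSpace ℝ (Fin d) => (1 + ‖x‖) ^ (-((d+1 : ℕ) : ℝ))) :=
    integrable_one_add_norm (by simp)
  have key : ∀ z (u : EuclideanSpace ℝ (Fin d)), ‖u‖ ≤ ‖z‖ →
      ‖f z‖ ≤ C * (1 + ‖u‖) ^ (-((d+1 : ℕ) : ℝ)) := by
    intro z u hu
    have hp : 0 < 1 + ‖u‖ := by positivity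
    rw [Real.rpow_neg hp.le, Real.rpow_natCast, ← div_eq_mul_inv, le_div_iff₀ (by positivity)]
    refine le_trans ?_ (hC z)
    rw [mul_comm]
    gcongr
  refine ⟨_, hI.const_mul C, fun x w => key _ _ ?_, fun x w => key _ _ ?_⟩
  all_goals
    refine abs_le_of_sq_le_sq' ?_ (norm_nonneg _) |>.2
    rw [kn_pair_normsq]
    nlinarith [sq_nonneg ‖x‖, sq_nonneg ‖w‖]

lemma kn_norm_exp (r : ℝ) : ‖cexp (Complex.I * (2 * Real.pi * r))‖ = 1 := by
  rw [Complex.norm_exp]; simp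

lemma kn_bound (a : SchwartzMap (EuclideanSpace ℝ (Fin d ⊕ Fin d)) ℂ)
    (x z : EuclideanSpace ℝ (Fin d)) :
    ‖∫ ω, a (pairE x ω) * Complex.exp (Complex.I * (2 * Real.pi * (inner ℝ z ω : ℝ)))‖ ≤
      ∫ ξ, ‖(𝓕 a) (pairE ξ (-z))‖ := by
  let b : EuclideanSpace ℝ (Fin d) → ℂ := fun x =>
    ∫ ω, a (pairE x ω) * Complex.exp (Complex.I * (2 * Real.pi * (inner ℝ z ω : ℝ)))
  have hac : Continuous (fun p : EuclideanSpace ℝ (Fin d) × EuclideanSpace ℝ (Fin d) =>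
      a (pairE p.1 p.2) * Complex.exp (Complex.I * (2 * Real.pi * (inner ℝ z p.2 : ℝ)))) := by
    have := a.continuous.comp (kn_pair_cont (d := d))
    refine this.mul ?_
    fun_prop
  have hprod : Integrable (fun p : EuclideanSpace ℝ (Fin d) × EuclideanSpace ℝ (Fin d) =>
      a (pairE p.1 p.2) * Complex.exp (Complex.I * (2 * Real.pi * (inner ℝ z p.2 : ℝ))))
      (volume.prod volume) := by
    have h := (kn_pair_mp (d := d)).integrable_comp_of_integrable (a.integrable (μ := volume))
    refine h.mono hac.aestronglyMeasurable (Filter.Eventually.of_forall fun p => ?_)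
    rw [norm_mul, kn_norm_exp, mul_one]; rfl
  have hbI : Integrable b := hprod.integral_prod_left
  have hbc : Continuous b := by
    obtain ⟨Φ, hΦ, h1, -⟩ := kn_decay a
    refine continuous_of_dominated (bound := Φ) (fun x => ?_) (fun x => ?_) hΦ ?_
    · exact (hac.comp (Continuous.prodMk_right x)).aestronglyMeasurable
    · refine Filter.Eventually.of_forall fun w => ?_
      rw [norm_mul, kn_norm_exp, mul_one]; exact h1 x w
    · refine Filter.Eventually.of_forall fun w => ?_
      exact hac.comp (Continuous.prodMk_left w)
  have hFb : ∀ ξ, 𝓕 b ξ = (𝓕 a) (pairE ξ (-z)) := by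
    intro ξ
    rw [SchwartzMap.fourier_coe, Real.fourier_eq', Real.fourier_eq',
      ← (kn_pair_mp (d := d)).integral_comp kn_pair_emb, integral_prod]
    · congr 1
      ext x
      rw [smul_eq_mul, ← integral_const_mul]
      congr 1
      ext w
      rw [kn_pair_inner, inner_neg_right, smul_eq_mul, real_inner_comm w z]
      have : cexp (((-2 * Real.pi * ((inner ℝ x ξ : ℝ) + -(inner ℝ w z : ℝ)) : ℝ) : ℂ) * Complex.I)
        = cexp (((-2 * Real.pi * (inner ℝ x ξ : ℝ) : ℝ) : ℂ) * Complex.I)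
          * cexp (Complex.I * (2 * Real.pi * (inner ℝ w z : ℝ))) := by
        rw [← Complex.exp_add]; congr 1; push_cast; ring
      rw [this]; ring
    · have h := (kn_pair_mp (d := d)).integrable_comp_of_integrable (a.integrable (μ := volume))
      refine h.mono ?_ (Filter.Eventually.of_forall fun p => ?_)
      · have : Continuous (fun p : EuclideanSpace ℝ (Fin d) × EuclideanSpace ℝ (Fin d) =>
            a (pairE p.1 p.2)) := a.continuous.comp (kn_pair_cont (d := d))
        have h2 := kn_pair_cont (d := d)
        refine Continuous.aestronglyMeasurable ?_
        fun_prop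
      · rw [norm_smul, Complex.norm_exp_ofReal_mul_I, one_mul]; rfl
  have hFI : Integrable (𝓕 b) := by
    obtain ⟨Φ, hΦ, -, h2⟩ := kn_decay (𝓕 a)
    have e : 𝓕 b = fun ξ => (𝓕 a) (pairE ξ (-z)) := funext hFb
    rw [e]
    refine hΦ.mono' ?_ (Filter.Eventually.of_forall fun ξ => h2 ξ (-z))
    exact ((𝓕 a).continuous.comp
      ((kn_pair_cont (d := d)).comp (Continuous.prodMk_left (-z)))).aestronglyMeasurable
  have hinv := congrFun (hbc.fourierInv_fourier_eq hbI hFI) x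
  change ‖b x‖ ≤ _
  rw [← hinv, Real.fourierInv_eq']
  refine (norm_integral_le_integral_norm _).trans (le_of_eq ?_)
  congr 1
  ext ξ
  rw [norm_smul, Complex.norm_exp_ofReal_mul_I, one_mul, hFb]

end KN2
/-- the kernel of `a(x,D)` with `a ∈ M^{2,1}` is dominated by
`F(x-y)` with `F ∈ L¹`, `‖F‖_{L¹} ≲ ‖a‖_{M^{2,1}}`. -/
theorem kn_kernel_dominated (d : ℕ) :
    ∃ C : ℝ, 0 < C ∧
      ∀ a : SchwartzMap (EuclideanSpace ℝ (Fin d ⊕ Fin d)) ℂ,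
        ∃ F : EuclideanSpace ℝ (Fin d) → ℝ,
          (∀ x, 0 ≤ F x) ∧ Integrable F ∧
          eLpNorm F 1 volume ≤ ENNReal.ofReal C * modNorm 2 1 ⇑a ∧
          ∀ x y : EuclideanSpace ℝ (Fin d),
            ‖∫ ω, a (pairE x ω) *
                Complex.exp (Complex.I * (2 * Real.pi * (inner ℝ (x - y) ω : ℝ)))‖ ≤
              F (x - y) := by
  refine ⟨(knc (Fin d ⊕ Fin d) ^ (-(1/2) : ℝ)).toReal, ?_, fun a => ?_⟩
  · exact ENNReal.toReal_pos (by simp [ENNReal.rpow_eq_zero_iff, knc_ne_zero, knc_ne_top])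
      (ENNReal.rpow_ne_top_of_ne_zero knc_ne_zero knc_ne_top)
  have hI : Integrable (fun p : EuclideanSpace ℝ (Fin d) × EuclideanSpace ℝ (Fin d) =>
      ‖(𝓕 a) (pairE p.1 p.2)‖) (volume.prod volume) :=
    ((kn_pair_mp (d := d)).integrable_comp_of_integrable ((𝓕 a).integrable (μ := volume))).norm
  have hI2 : Integrable (fun z : EuclideanSpace ℝ (Fin d) => ∫ ξ, ‖(𝓕 a) (pairE ξ z)‖) :=
    hI.integral_prod_right
  refine ⟨fun z => ∫ ξ, ‖(𝓕 a) (pairE ξ (-z))‖, fun z => integral_nonneg fun _ => norm_nonneg _,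
    hI2.comp_neg, ?_, fun x y => kn_bound a x (x - y)⟩
  have h1 : eLpNorm (fun z : EuclideanSpace ℝ (Fin d) => ∫ ξ, ‖(𝓕 a) (pairE ξ (-z))‖) 1 volume
      ≤ ∫⁻ η, (‖(𝓕 a) η‖₊ : ℝ≥0∞) := by
    rw [eLpNorm_one_eq_lintegral_enorm,
      lintegral_neg_eq_self (μ := volume) (f := fun z : EuclideanSpace ℝ (Fin d) =>
        ‖∫ ξ : EuclideanSpace ℝ (Fin d),
          ‖(𝓕 a : SchwartzMap (EuclideanSpace ℝ (Fin d ⊕ Fin d)) ℂ) (pairE ξ z)‖‖ₑ),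
      ← (kn_pair_mp (d := d)).lintegral_comp_emb kn_pair_emb, lintegral_prod_symm]
    · refine lintegral_mono fun z => (enorm_integral_le_lintegral_enorm _).trans (le_of_eq ?_)
      simp [enorm]
    · have := (𝓕 a).continuous.comp (kn_pair_cont (d := d))
      exact this.nnnorm.measurable.coe_nnreal_ennreal.aemeasurable
  refine h1.trans ?_
  have hc0 := knc_ne_zero (ι := Fin d ⊕ Fin d)
  have hct := knc_ne_top (ι := Fin d ⊕ Fin d)
  rw [ENNReal.ofReal_toReal (ENNReal.rpow_ne_top_of_ne_zero hc0 hct)]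
  have h2 := kn_l1 a
  rw [lintegral_mul_const' _ _ hct] at h2
  have h3 := (ENNReal.le_div_iff_mul_le (Or.inl hc0) (Or.inl hct)).2 h2
  refine h3.trans (le_of_eq ?_)
  rw [div_eq_mul_inv, mul_assoc, ← ENNReal.rpow_neg_one, ← ENNReal.rpow_add _ _ hc0 hct, mul_comm]
  norm_num
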